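/- Let ℓ = 163 and let L be the unique degree-3 intermediate field of ℚ(ζ_ℓ)/ℚ, with ring of integers O_L. Then every prime ideal of O_L containing 163 is a principal ideal. (Equivalently, since 163 is totally ramified in L, the unique prime of L above 163 is principal, so 163 splits completely in the Hilbert class field of L.) -/

import Mathlib

instance (ℓ : ℕ+) : FiniteDimensional ℚ (CyclotomicField ℓ ℚ) :=
  haveI : NeZero ((ℓ : ℕ) : ℚ) := ⟨Nat.cast_ne_zero.mpr ℓ.ne_zero⟩
  @IsCyclotomicExtension.finiteDimensional {(ℓ : ℕ)} ℚ _ _ _ _ _ _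
    (CyclotomicField.isCyclotomicExtension (ℓ : ℕ) ℚ)

instance (ℓ : ℕ+) (L : IntermediateField ℚ (CyclotomicField ℓ ℚ)) : NumberField L := ⟨⟩

/-!
Every prime above `p` in a `p`-power cyclotomic field `K` is generated by `ζ - 1` and has inertia
degree one over `ℤ`. If `Q` is a prime of `K` above a prime `P` of a subfield, then `P` is the
relative norm of `Q`, because `Q` also has inertia degree one over `P`; so `P` is generated by the
norm of `ζ - 1`.
-/

open NumberField

section RelNorm

variable {R S : Type*} [CommRing R] [IsDedekindDomain R] [CommRing S] [IsDedekindDomain S]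
  [Algebra R S] [Module.Finite R S] [Module.IsTorsionFree R S]

theorem isPrincipal_relNorm (I : Ideal S) [hI : I.IsPrincipal] :
    (Ideal.relNorm R I).IsPrincipal := by
  obtain ⟨x, rfl⟩ := hI
  exact ⟨Algebra.intNorm R S x, Ideal.relNorm_singleton R x⟩

theorem isPrincipal_of_liesOver_of_inertiaDeg_eq_one [PerfectField (FractionRing R)]
    (Q : Ideal S) (P : Ideal R) [Q.IsMaximal] [P.IsMaximal] [Q.LiesOver P] [Q.IsPrincipal]
    (hQ : Q.inertiaDeg R = 1) : P.IsPrincipal := by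
  have hP : Ideal.relNorm R Q = P := by rw [Ideal.relNorm_eq_pow_of_isMaximal Q P, hQ, pow_one]
  exact hP ▸ isPrincipal_relNorm Q

end RelNorm

theorem primes_above_163_principal_general {p : ℕ} [hp : Fact p.Prime] (k : ℕ)
    (K : Type*) [Field K] [NumberField K] [hK : IsCyclotomicExtension {p ^ (k + 1)} ℚ K]
    {L : Type*} [Field L] [NumberField L] [Algebra L K]
    (P : Ideal (𝓞 L)) [P.IsPrime] (hpP : (p : 𝓞 L) ∈ P) : P.IsPrincipal := by
  have : P.LiesOver (Ideal.span {(p : ℤ)}) :=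
    (Ideal.liesOver_span_iff Ideal.IsPrime.ne_top' (Nat.prime_iff_prime_int.mp hp.out)).mpr
      (by simpa using hpP)
  have : P.IsMaximal := .of_liesOver_isMaximal P (Ideal.span {(p : ℤ)})
  obtain ⟨Q, _, _⟩ := Ideal.exists_maximal_ideal_liesOver_of_isIntegral (S := 𝓞 K) P
  have : Q.LiesOver (Ideal.span {(p : ℤ)}) := .trans Q P _
  have : Q.IsPrincipal :=
    ⟨_, IsCyclotomicExtension.Rat.eq_span_zeta_sub_one_of_liesOver p k K hK.zeta_spec Q⟩
  refine isPrincipal_of_liesOver_of_inertiaDeg_eq_one Q P (Nat.dvd_one.mp ?_)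
  rw [← IsCyclotomicExtension.Rat.inertiaDeg_eq_of_prime_pow p k K Q]
  exact Ideal.inertiaDeg_above_dvd P Q

/-- Let `ℓ = 163` and let `L` be the unique degree-3 intermediate field of `ℚ(ζ_ℓ)/ℚ`, with
ring of integers `O_L`.  Then every prime ideal of `O_L` containing `163` is principal. -/
theorem primes_above_163_principal
    (L : IntermediateField ℚ (CyclotomicField 163 ℚ)) (hL : Module.finrank ℚ L = 3)
    (P : Ideal (NumberField.RingOfIntegers L)) (hP : P.IsPrime)
    (h163 : (163 : NumberField.RingOfIntegers L) ∈ P) :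
    P.IsPrincipal := by
  have : Fact (Nat.Prime 163) := ⟨by norm_num⟩
  have : IsCyclotomicExtension {163 ^ (0 + 1)} ℚ (CyclotomicField 163 ℚ) :=
    CyclotomicField.isCyclotomicExtension 163 ℚ
  exact primes_above_163_principal_general 0 (CyclotomicField 163 ℚ) P (by exact_mod_cast h163)
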